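/- Let D ⊆ 𝒫 be weakly compact and X, Y ∈ L^1_s(D). Then the utility contribution of X to Y equals the one-sided directional derivative of u at Y in direction X: u^c(X;Y) = lim_{ε↓0} ε^{-1}(u(Y + εX) − u(Y)). -/

import Mathlib

open MeasureTheory Filter Set
open scoped ENNReal

variable {Ω : Type*} [MeasurableSpace Ω]

/-- Densities of probability measures absolutely continuous w.r.t. `P`. -/
def Dens (P : Measure Ω) : Set (Ω → ℝ) :=
  {Z | Measurable Z ∧ (∀ ω, 0 ≤ Z ω) ∧ ∫⁻ ω, ENNReal.ofReal (Z ω) ∂P = 1}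

/-- `E_Q[X] = E_Q[X⁺] − E_Q[X⁻]` with the convention `∞ − ∞ = −∞`, where `dQ/dP = Z`. -/
noncomputable def eexp (P : Measure Ω) (Z X : Ω → ℝ) : EReal :=
  if (∫⁻ ω, ENNReal.ofReal (-(Z ω * X ω)) ∂P) = ⊤ then ⊥
  else ((∫⁻ ω, ENNReal.ofReal (Z ω * X ω) ∂P : ℝ≥0∞) : EReal)
    - ((∫⁻ ω, ENNReal.ofReal (-(Z ω * X ω)) ∂P : ℝ≥0∞) : EReal)

/-- Coherent utility function determined by a set of densities `D`. -/
noncomputable def cohU (P : Measure Ω) (D : Set (Ω → ℝ)) (X : Ω → ℝ) : EReal :=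
  ⨅ Z ∈ D, eexp P Z X

/-- The weak `L¹`-space associated with `D`. -/
def Lw (P : Measure Ω) (D : Set (Ω → ℝ)) : Set (Ω → ℝ) :=
  {X | Measurable X ∧ ⊥ < cohU P D X ∧ ⊥ < cohU P D (fun ω => -X ω)}

noncomputable def tailSup (P : Measure Ω) (D : Set (Ω → ℝ)) (X : Ω → ℝ) (n : ℕ) : ℝ≥0∞ :=
  ⨆ Z ∈ D, ∫⁻ ω in {ω | (n : ℝ) < |X ω|}, ENNReal.ofReal (Z ω * |X ω|) ∂P

/-- The strong `L¹`-space associated with `D`. -/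
def Ls (P : Measure Ω) (D : Set (Ω → ℝ)) : Set (Ω → ℝ) :=
  {X | Measurable X ∧ Tendsto (tailSup P D X) atTop (nhds 0)}

/-- Risk-neutral densities for the set `A` of attainable P&Ls. -/
def RiskNeutral (P : Measure Ω) (A : Set (Ω → ℝ)) : Set (Ω → ℝ) :=
  {Z | Z ∈ Dens P ∧ ∀ X ∈ A, eexp P Z X ≤ 0}

/-- `A` is `D`-consistent. -/
def DConsistent (P : Measure Ω) (D A : Set (Ω → ℝ)) : Prop :=
  ∃ A' ⊆ A ∩ Ls P D, D ∩ RiskNeutral P A = D ∩ RiskNeutral P A'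

/-- Sequential compactness of `D` in the weak topology `σ(L¹, L^∞)`. -/
def WSeqCompact (P : Measure Ω) (D : Set (Ω → ℝ)) : Prop :=
  ∀ Z : ℕ → Ω → ℝ, (∀ n, Z n ∈ D) → ∃ W ∈ D, ∃ φ : ℕ → ℕ, StrictMono φ ∧
    ∀ g : Ω → ℝ, Measurable g → (∃ C : ℝ, ∀ ω, |g ω| ≤ C) →
      Tendsto (fun k => ∫ ω, Z (φ k) ω * g ω ∂P) atTop (nhds (∫ ω, W ω * g ω ∂P))

/-- `D` is closed under `L¹`-convergence (within densities). -/
def L1Closed (P : Measure Ω) (D : Set (Ω → ℝ)) : Prop :=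
  ∀ Z : ℕ → Ω → ℝ, (∀ n, Z n ∈ D) → ∀ W ∈ Dens P,
    Tendsto (fun n => ∫ ω, |Z n ω - W ω| ∂P) atTop (nhds 0) → W ∈ D


/-- The set `𝒳_D(Y)` of extreme measures for `Y`:
`Q ∈ D` with `E_Q[Y] = u(Y) ∈ (−∞, ∞)`. -/
def ExtSet (P : Measure Ω) (D : Set (Ω → ℝ)) (Y : Ω → ℝ) : Set (Ω → ℝ) :=
  {Z | Z ∈ D ∧ eexp P Z Y = cohU P D Y ∧ ⊥ < cohU P D Y ∧ cohU P D Y < ⊤}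

open scoped Topology

/-- The minimum of `p ↦ p.1 + ε * p.2` over a compact planar set `K` has right derivative at
`ε = 0` equal to the minimum of `p.2` over the minimisers of `p.1`. -/
theorem IsCompact.tendsto_slope_iInf_fst_add_mul_snd {K : Set (ℝ × ℝ)} (hK : IsCompact K)
    (hne : K.Nonempty) {m : EReal} (hm : m = ⨅ p ∈ K, (p.1 : EReal)) :
    Tendsto (fun ε : ℝ =>
        ((ε⁻¹ : ℝ) : EReal) * ((⨅ p ∈ K, ((p.1 + ε * p.2 : ℝ) : EReal)) - m))
      (𝓝[>] 0) (𝓝 (⨅ p ∈ {p ∈ K | (p.1 : EReal) = m}, (p.2 : EReal))) := by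
  have hmin : ∀ {S : Set (ℝ × ℝ)}, IsCompact S → S.Nonempty → ∀ f : ℝ × ℝ → ℝ, Continuous f →
      ∃ q ∈ S, (∀ p ∈ S, f q ≤ f p) ∧ (⨅ p ∈ S, (f p : EReal)) = (f q : EReal) := by
    intro S hS hSne f hf
    obtain ⟨q, hq, hle⟩ := hS.exists_isMinOn hSne hf.continuousOn
    refine ⟨q, hq, fun p hp => hle hp, le_antisymm (iInf₂_le q hq) ?_⟩
    exact le_iInf₂ fun p hp => EReal.coe_le_coe_iff.2 (hle hp)
  obtain ⟨q₀, hq₀, hq₀min, hq₀eq⟩ := hmin hK hne (fun p => p.1) continuous_fst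
  obtain rfl : m = (q₀.1 : EReal) := hm.trans hq₀eq
  simp only [EReal.coe_eq_coe_iff]
  have hF : IsCompact {p ∈ K | p.1 = q₀.1} :=
    hK.inter_right (isClosed_eq continuous_fst continuous_const)
  obtain ⟨q, ⟨hqK, hq1⟩, hqmin, hqeq⟩ := hmin hF ⟨q₀, hq₀, rfl⟩ (fun p => p.2) continuous_snd
  obtain ⟨b, -, hb, -⟩ := hmin hK hne (fun p => p.2) continuous_snd
  choose p hpK hpmin hpeq using fun ε : ℝ =>
    hmin hK hne (fun p => p.1 + ε * p.2) (by fun_prop)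
  rw [hqeq]
  simp only [hpeq, ← EReal.coe_sub, ← EReal.coe_mul]
  rw [EReal.tendsto_coe]
  have hupper : ∀ ε : ℝ, 0 < ε → ε⁻¹ * ((p ε).1 + ε * (p ε).2 - q₀.1) ≤ q.2 := by
    intro ε hε
    rw [inv_mul_le_iff₀ hε]
    have := hpmin ε q hqK
    simp only [hq1] at this
    linarith
  have hlower : ∀ ε : ℝ, 0 < ε → (p ε).2 ≤ ε⁻¹ * ((p ε).1 + ε * (p ε).2 - q₀.1) := by
    intro ε hε
    rw [le_inv_mul_iff₀ hε]
    have := hq₀min _ (hpK ε)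
    linarith
  refine tendsto_order.2 ⟨fun c hc => ?_, fun c hc => ?_⟩
  · rcases (K ∩ {p | p.2 ≤ c}).eq_empty_or_nonempty with hempty | hne'
    · filter_upwards [self_mem_nhdsWithin] with ε hε
      refine lt_of_lt_of_le (not_le.1 fun h => ?_) (hlower ε hε)
      exact hempty.subset ⟨hpK ε, h⟩
    · obtain ⟨r, ⟨hrK, hr2⟩, hrmin, -⟩ :=
        hmin (hK.inter_right (isClosed_le continuous_snd continuous_const)) hne'
          (fun p => p.1) continuous_fst
      have hlt : q₀.1 < r.1 := by
        refine lt_of_le_of_ne (hq₀min r hrK) fun h => ?_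
        have := hqmin r ⟨hrK, h.symm⟩
        simp only [mem_ofPred_eq] at hr2
        linarith
      have hsmall : ∀ᶠ ε : ℝ in 𝓝[>] 0, ε * (q.2 - b.2) < r.1 - q₀.1 := by
        refine nhdsWithin_le_nhds (Tendsto.eventually_lt_const (v := 0) (by linarith) ?_)
        simpa using (continuous_mul_const (q.2 - b.2)).tendsto (0 : ℝ)
      filter_upwards [self_mem_nhdsWithin, hsmall] with ε hε hεs
      refine lt_of_lt_of_le (not_le.1 fun h => ?_) (hlower ε hε)
      have h1 := hrmin (p ε) ⟨hpK ε, h⟩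
      have h2 := hpmin ε q hqK
      have h3 := mul_le_mul_of_nonneg_left (hb (p ε) (hpK ε)) (le_of_lt hε)
      simp only [hq1] at h2
      linarith
  · filter_upwards [self_mem_nhdsWithin] with ε hε
    exact (hupper ε hε).trans_lt hc

theorem eexp_eq_integral {P : Measure Ω} {Z X : Ω → ℝ}
    (h : Integrable (fun ω => Z ω * X ω) P) :
    eexp P Z X = ((∫ ω, Z ω * X ω ∂P : ℝ) : EReal) := by
  have hpos : ∫⁻ ω, ENNReal.ofReal (Z ω * X ω) ∂P ≠ ⊤ := h.lintegral_lt_top.ne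
  have hneg : ∫⁻ ω, ENNReal.ofReal (-(Z ω * X ω)) ∂P ≠ ⊤ := h.neg.lintegral_lt_top.ne
  rw [eexp, if_neg hneg, integral_eq_lintegral_pos_part_sub_lintegral_neg_part h, EReal.coe_sub,
    EReal.coe_ennreal_toReal hpos, EReal.coe_ennreal_toReal hneg]

theorem Dens.integrable {P : Measure Ω} {Z : Ω → ℝ} (hZ : Z ∈ Dens P) : Integrable Z P := by
  refine ⟨hZ.1.aestronglyMeasurable, ?_⟩
  rw [hasFiniteIntegral_iff_ofReal (ae_of_all _ hZ.2.1), hZ.2.2]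
  exact ENNReal.one_lt_top

/-- Truncation of `X` to zero where `n < |X|`. -/
noncomputable def truncAbs (X : Ω → ℝ) (n : ℕ) : Ω → ℝ :=
  {ω | (n : ℝ) < |X ω|}ᶜ.indicator X

theorem abs_truncAbs_le {α : Type*} (X : α → ℝ) (n : ℕ) (ω : α) : |truncAbs X n ω| ≤ n := by
  by_cases h : (n : ℝ) < |X ω|
  · simp [truncAbs, h]
  · simpa [truncAbs, h] using not_lt.1 h

theorem measurableSet_lt_abs {X : Ω → ℝ} (hX : Measurable X) (n : ℕ) :
    MeasurableSet {ω | (n : ℝ) < |X ω|} :=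
  measurableSet_lt measurable_const hX.abs

theorem measurable_truncAbs {X : Ω → ℝ} (hX : Measurable X) (n : ℕ) :
    Measurable (truncAbs X n) :=
  hX.indicator (measurableSet_lt_abs hX n).compl

theorem integrable_mul_truncAbs {P : Measure Ω} {Z X : Ω → ℝ} (hZ : Z ∈ Dens P)
    (hX : Measurable X) (n : ℕ) : Integrable (fun ω => Z ω * truncAbs X n ω) P :=
  (Dens.integrable hZ).mul_bdd (measurable_truncAbs hX n).aestronglyMeasurable
    (ae_of_all _ (abs_truncAbs_le X n))

theorem lintegral_enorm_mul_sub_truncAbs_le {P : Measure Ω} {D : Set (Ω → ℝ)} {Z X : Ω → ℝ}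
    (hZ : Z ∈ D) (hZ0 : ∀ ω, 0 ≤ Z ω) (hX : Measurable X) (n : ℕ) :
    ∫⁻ ω, ‖Z ω * X ω - Z ω * truncAbs X n ω‖ₑ ∂P ≤ tailSup P D X n := by
  refine le_trans (le_of_eq ?_) (le_iSup₂ (f := fun Z (_ : Z ∈ D) =>
    ∫⁻ ω in {ω | (n : ℝ) < |X ω|}, ENNReal.ofReal (Z ω * |X ω|) ∂P) Z hZ)
  rw [← lintegral_indicator (measurableSet_lt_abs hX n)]
  refine lintegral_congr fun ω => ?_
  by_cases h : (n : ℝ) < |X ω|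
  · simp [truncAbs, h, Real.enorm_eq_ofReal_abs, ENNReal.ofReal_mul, abs_of_nonneg, hZ0]
  · simp [truncAbs, h]

theorem Ls.integrable_mul {P : Measure Ω} {D : Set (Ω → ℝ)} (hD : D ⊆ Dens P) {X Z : Ω → ℝ}
    (hX : X ∈ Ls P D) (hZ : Z ∈ D) : Integrable (fun ω => Z ω * X ω) P := by
  obtain ⟨n, hn⟩ := (hX.2.eventually_lt_const ENNReal.zero_lt_top).exists
  have hmeas := (hD hZ).1
  have htail : Integrable (fun ω => Z ω * X ω - Z ω * truncAbs X n ω) P :=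
    ⟨((hmeas.mul hX.1).sub (hmeas.mul (measurable_truncAbs hX.1 n))).aestronglyMeasurable,
      (lintegral_enorm_mul_sub_truncAbs_le hZ (hD hZ).2.1 hX.1 n).trans_lt hn⟩
  refine (htail.add (integrable_mul_truncAbs (hD hZ) hX.1 n)).congr (ae_of_all _ fun ω => ?_)
  simp

theorem Ls.tendstoUniformlyOn_integral_truncAbs {P : Measure Ω} {D : Set (Ω → ℝ)}
    (hD : D ⊆ Dens P) {X : Ω → ℝ} (hX : X ∈ Ls P D) :
    TendstoUniformlyOn (fun (n : ℕ) (Z : Ω → ℝ) => ∫ ω, Z ω * truncAbs X n ω ∂P)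
      (fun Z => ∫ ω, Z ω * X ω ∂P) atTop D := by
  rw [EMetric.tendstoUniformlyOn_iff]
  intro δ hδ
  filter_upwards [hX.2.eventually_lt_const hδ] with n hn Z hZ
  refine lt_of_le_of_lt ?_ hn
  rw [edist_eq_enorm_sub, ← integral_sub (Ls.integrable_mul hD hX hZ)
    (integrable_mul_truncAbs (hD hZ) hX.1 n)]
  exact (enorm_integral_le_lintegral_enorm _).trans
    (lintegral_enorm_mul_sub_truncAbs_le hZ (hD hZ).2.1 hX.1 n)

/-- On `D`, weak convergence against bounded functions extends to `L¹_s(D)`. -/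
theorem Ls.tendsto_integral_mul {P : Measure Ω} {D : Set (Ω → ℝ)} (hD : D ⊆ Dens P)
    {X : Ω → ℝ} (hX : X ∈ Ls P D) {Z : ℕ → Ω → ℝ} (hZ : ∀ k, Z k ∈ D) {W : Ω → ℝ} (hW : W ∈ D)
    (h : ∀ g : Ω → ℝ, Measurable g → (∃ C : ℝ, ∀ ω, |g ω| ≤ C) →
      Tendsto (fun k => ∫ ω, Z k ω * g ω ∂P) atTop (𝓝 (∫ ω, W ω * g ω ∂P))) :
    Tendsto (fun k => ∫ ω, Z k ω * X ω ∂P) atTop (𝓝 (∫ ω, W ω * X ω ∂P)) := by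
  have hunif := Ls.tendstoUniformlyOn_integral_truncAbs hD hX
  refine TendstoUniformlyOnFilter.tendsto_of_eventually_tendsto
    (p := atTop) (p' := atTop) (F := fun n k => ∫ ω, Z k ω * truncAbs X n ω ∂P)
    (L := fun n => ∫ ω, W ω * truncAbs X n ω ∂P) ?_ (Eventually.of_forall fun n =>
      h _ (measurable_truncAbs hX.1 n) ⟨n, abs_truncAbs_le X n⟩) (hunif.tendsto_at hW)
  have := hunif.comp Z
  rw [show Z ⁻¹' D = univ from eq_univ_of_forall hZ, tendstoUniformlyOn_univ,
    tendstoUniformly_iff_tendstoUniformlyOnFilter] at this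
  exact this.mono_right le_top

theorem WSeqCompact.isCompact_image_integral {P : Measure Ω} {D : Set (Ω → ℝ)}
    (hD : D ⊆ Dens P) (hcomp : WSeqCompact P D) {X Y : Ω → ℝ} (hX : X ∈ Ls P D)
    (hY : Y ∈ Ls P D) :
    IsCompact ((fun Z : Ω → ℝ => (∫ ω, Z ω * Y ω ∂P, ∫ ω, Z ω * X ω ∂P)) '' D) := by
  refine IsSeqCompact.isCompact fun x hx => ?_
  choose Z hZ hZx using hx
  obtain ⟨W, hW, φ, hφ, h⟩ := hcomp Z hZ
  refine ⟨_, mem_image_of_mem _ hW, φ, hφ, ?_⟩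
  rw [← funext hZx]
  exact (Ls.tendsto_integral_mul hD hY (fun k => hZ (φ k)) hW h).prodMk_nhds
    (Ls.tendsto_integral_mul hD hX (fun k => hZ (φ k)) hW h)

/-- If `D` is weakly compact and `X, Y ∈ L¹_s(D)`, then the utility
contribution `u^c(X;Y) = inf_{Q ∈ 𝒳_D(Y)} E_Q[X]` equals the one-sided directional
derivative `lim_{ε↓0} ε⁻¹ (u(Y + εX) − u(Y))`. -/
theorem stmt_10 (P : Measure Ω) [IsProbabilityMeasure P] (D : Set (Ω → ℝ))
    (hDsub : D ⊆ Dens P) (hDne : D.Nonempty) (hDcomp : WSeqCompact P D)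
    (X Y : Ω → ℝ) (hX : X ∈ Ls P D) (hY : Y ∈ Ls P D) :
    Tendsto (fun ε : ℝ =>
        ((ε⁻¹ : ℝ) : EReal) * (cohU P D (fun ω => Y ω + ε * X ω) - cohU P D Y))
      (nhdsWithin 0 (Set.Ioi 0)) (nhds (⨅ Z ∈ ExtSet P D Y, eexp P Z X)) := by
  set e : (Ω → ℝ) → ℝ × ℝ := fun Z => (∫ ω, Z ω * Y ω ∂P, ∫ ω, Z ω * X ω ∂P)
  have hK : IsCompact (e '' D) := hDcomp.isCompact_image_integral hDsub hX hY
  have hiX : ∀ Z ∈ D, eexp P Z X = ((e Z).2 : EReal) := fun Z hZ =>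
    eexp_eq_integral (Ls.integrable_mul hDsub hX hZ)
  have hiY : ∀ Z ∈ D, eexp P Z Y = ((e Z).1 : EReal) := fun Z hZ =>
    eexp_eq_integral (Ls.integrable_mul hDsub hY hZ)
  have huY : cohU P D Y = ⨅ p ∈ e '' D, (p.1 : EReal) := by
    rw [iInf_image]
    exact biInf_congr hiY
  have huε : ∀ ε : ℝ, cohU P D (fun ω => Y ω + ε * X ω) =
      ⨅ p ∈ e '' D, ((p.1 + ε * p.2 : ℝ) : EReal) := by
    intro ε
    rw [iInf_image]
    refine biInf_congr fun Z hZ => ?_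
    have hZY := Ls.integrable_mul hDsub hY hZ
    have hZX := (Ls.integrable_mul hDsub hX hZ).const_mul ε
    have hfun : (fun ω => Z ω * (Y ω + ε * X ω)) =
        fun ω => Z ω * Y ω + ε * (Z ω * X ω) := by
      funext ω
      ring
    rw [eexp_eq_integral (by rw [hfun]; exact hZY.add hZX), hfun, integral_add hZY hZX,
      integral_const_mul]
  obtain ⟨q, hqD, hq⟩ : ∃ q ∈ D, cohU P D Y = ((e q).1 : EReal) := by
    obtain ⟨_, ⟨q, hqD, rfl⟩, hle⟩ :=
      hK.exists_isMinOn (hDne.image e) continuous_fst.continuousOn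
    refine ⟨q, hqD, huY.trans (le_antisymm (iInf₂_le _ (mem_image_of_mem e hqD)) ?_)⟩
    exact le_iInf₂ fun p hp => EReal.coe_le_coe_iff.2 (hle hp)
  have hext : (⨅ Z ∈ ExtSet P D Y, eexp P Z X) =
      ⨅ p ∈ {p ∈ e '' D | (p.1 : EReal) = cohU P D Y}, (p.2 : EReal) := by
    have hset : {p ∈ e '' D | (p.1 : EReal) = cohU P D Y} = e '' ExtSet P D Y := by
      ext p
      constructor
      · rintro ⟨⟨Z, hZ, rfl⟩, hp⟩
        refine ⟨Z, ⟨hZ, (hiY Z hZ).trans hp, ?_, ?_⟩, rfl⟩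
        · exact hq ▸ EReal.bot_lt_coe _
        · exact hq ▸ EReal.coe_lt_top _
      · rintro ⟨Z, hZ, rfl⟩
        exact ⟨mem_image_of_mem e hZ.1, (hiY Z hZ.1).symm.trans hZ.2.1⟩
    rw [hset, iInf_image]
    exact biInf_congr fun Z hZ => hiX Z hZ.1
  simp only [huε, hext]
  exact hK.tendsto_slope_iInf_fst_add_mul_snd (hDne.image e) huY
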